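/- For every integer n ≥ 1, f(n) ≥ ⌊(n-1)²/4⌋; that is, there is a labeling of the vertices of an n-cycle whose cyclic sorting distance to the trivial cyclic permutation is at least ⌊(n-1)²/4⌋. -/

import Mathlib

/-!
The reversal `i ↦ -i` is far from every rotation. Write `L a b ∈ ℤ/2` for the indicator of
`a < b` (comparing representatives in `{0, …, n - 1}`), and look at how `L (σ x) (σ y)` depends
on the permutation `σ`, for `x ≠ y`, modulo coboundaries `g x + g y`. The class of
`L` modulo coboundaries encodes the cyclic orientation of all triples.

* Composing with a rotation changes `L` by a coboundary (`ordBit_zpow`).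
* An adjacent swap flips `L` at the one swapped pair, up to a coboundary, which is needed only
  when the swap crosses the cut between `n - 1` and `0` (`ordBit_swap`).
* The reversal flips `L` at every pair, up to a coboundary (`ordBit_neg`).

Hence if `m` adjacent swaps carry the reversal to a rotation, then for some `g` every pair with
`g x = g y` is swapped an odd number of times. If `g` has level sets of sizes `a` and `b`, this
gives `m ≥ a.choose 2 + b.choose 2 ≥ ⌊(n - 1)² / 4⌋`.
-/

/-- The trivial cyclic shift `i ↦ i + 1` on `ZMod n`. -/
def trivCycle (n : ℕ) : Equiv.Perm (ZMod n) := Equiv.addRight 1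

/-- A permutation of `ZMod n` is an adjacent swap if it swaps two adjacent
points `i` and `i + 1` on the circle. -/
def IsAdjacentSwap {n : ℕ} (t : Equiv.Perm (ZMod n)) : Prop :=
  ∃ i : ZMod n, t = Equiv.swap i (i + 1)

/-- The cyclic sorting distance of `π`: the minimal `m` such that there are
adjacent swaps `t_1, …, t_m` with `t_m ∘ ⋯ ∘ t_1 ∘ π` in the cyclic subgroup
generated by the trivial cycle. -/
noncomputable def sortDist {n : ℕ} (π : Equiv.Perm (ZMod n)) : ℕ :=
  sInf {m | ∃ l : List (Equiv.Perm (ZMod n)),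
    l.length = m ∧ (∀ t ∈ l, IsAdjacentSwap t) ∧
    l.prod * π ∈ Subgroup.zpowers (trivCycle n)}

/-- `f n` is the maximal cyclic sorting distance over all labelings. -/
noncomputable def f (n : ℕ) : ℕ :=
  sSup {m | ∃ π : Equiv.Perm (ZMod n), m = sortDist π}

/-- The indicator, modulo `2`, of `a < b` for the representatives of `a`, `b` in
`{0, …, n - 1}`. -/
def ordBit {n : ℕ} (a b : ZMod n) : ZMod 2 := if a.val < b.val then 1 else 0

lemma val_add_one_cases {k : ℕ} (i : ZMod (k + 1)) :
    ((i + 1).val = i.val + 1 ∧ i.val < k) ∨ ((i + 1).val = 0 ∧ i.val = k) := by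
  have hi : i.val < k + 1 := ZMod.val_lt i
  rcases eq_or_ne i.val k with hk | hk
  · right
    refine ⟨?_, hk⟩
    have : i = Fin.last k := Fin.ext hk
    rw [this]
    exact congrArg Fin.val (Fin.last_add_one k)
  · left
    have hlt : i.val < k := by omega
    exact ⟨Fin.val_add_one_of_lt (n := k) (i := i) (Fin.lt_def.mpr hlt), hlt⟩

lemma ordBit_swap {k : ℕ} (i : ZMod (k + 1)) :
    ∃ g : ZMod (k + 1) → ZMod 2, ∀ a b, a ≠ b →
      ordBit (Equiv.swap i (i + 1) a) (Equiv.swap i (i + 1) b) =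
        ordBit a b + (if s(i, i + 1) = s(a, b) then 1 else 0) + g a + g b := by
  have key : ∀ a b : ZMod (k + 1), a = b ↔ a.val = b.val :=
    fun a b => (ZMod.val_injective (k + 1)).eq_iff.symm
  have two : (1 + 1 : ZMod 2) = 0 := by decide
  have lt : ∀ a : ZMod (k + 1), a.val < k + 1 := fun a => ZMod.val_lt a
  rcases val_add_one_cases i with ⟨h1, h2⟩ | ⟨h1, h2⟩
  · refine ⟨fun _ => 0, fun a b hab => ?_⟩
    have ha := lt a
    have hb := lt b
    simp only [Sym2.eq_iff, Equiv.swap_apply_def, ordBit, key, ne_eq] at *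
    grind
  -- The swap crosses the cut: every pair meeting `{i, i + 1}` is flipped.
  · refine ⟨fun x => if x = i ∨ x = i + 1 then 1 else 0, fun a b hab => ?_⟩
    have ha := lt a
    have hb := lt b
    simp only [Sym2.eq_iff, Equiv.swap_apply_def, ordBit, key, ne_eq] at *
    grind

lemma ordBit_add_one {k : ℕ} :
    ∃ g : ZMod (k + 1) → ZMod 2, ∀ a b, a ≠ b →
      ordBit (a + 1) (b + 1) = ordBit a b + g a + g b := by
  refine ⟨fun x => if x.val = k then 1 else 0, fun a b hab => ?_⟩
  have hab' : a.val ≠ b.val := fun h => hab (ZMod.val_injective _ h)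
  have two : (1 + 1 : ZMod 2) = 0 := by decide
  have h1 := val_add_one_cases a
  have h2 := val_add_one_cases b
  simp only [ordBit]
  grind

lemma ordBit_neg {k : ℕ} :
    ∃ g : ZMod (k + 1) → ZMod 2, ∀ a b, a ≠ b →
      ordBit (-a) (-b) = ordBit a b + 1 + g a + g b := by
  refine ⟨fun x => if x.val = 0 then 1 else 0, fun a b hab => ?_⟩
  have hab' : a.val ≠ b.val := fun h => hab (ZMod.val_injective _ h)
  have two : (1 + 1 : ZMod 2) = 0 := by decide
  have ha : a.val < k + 1 := ZMod.val_lt a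
  have hb : b.val < k + 1 := ZMod.val_lt b
  have h1 := ZMod.neg_val a
  have h2 := ZMod.neg_val b
  simp only [← ZMod.val_eq_zero] at h1 h2
  simp only [ordBit]
  grind

lemma ordBit_add_natCast {k : ℕ} (j : ℕ) :
    ∃ g : ZMod (k + 1) → ZMod 2, ∀ a b : ZMod (k + 1), a ≠ b →
      ordBit (a + (j : ZMod (k + 1))) (b + (j : ZMod (k + 1))) = ordBit a b + g a + g b := by
  induction j with
  | zero => exact ⟨fun _ => 0, by simp⟩
  | succ j ih =>
    obtain ⟨g, hg⟩ := ih
    obtain ⟨g', hg'⟩ := ordBit_add_one (k := k)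
    refine ⟨fun x => g x + g' (x + j), fun a b hab => ?_⟩
    have h := hg' (a + j) (b + j) (by simpa using hab)
    push_cast
    rw [← add_assoc, ← add_assoc, h, hg a b hab]
    ring

lemma ordBit_zpow {k : ℕ} {r : Equiv.Perm (ZMod (k + 1))}
    (hr : r ∈ Subgroup.zpowers (trivCycle (k + 1))) :
    ∃ g : ZMod (k + 1) → ZMod 2, ∀ a b, a ≠ b →
      ordBit (r a) (r b) = ordBit a b + g a + g b := by
  obtain ⟨j, rfl⟩ := mem_zpowers_iff_mem_range_orderOf.mp hr |> Finset.mem_image.mp |>.imp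
    fun _ h => h.2
  have : ∀ x : ZMod (k + 1), (trivCycle (k + 1) ^ j) x = x + j := by
    intro x
    clear hr
    induction j with
    | zero => simp
    | succ j ih =>
      rw [pow_succ', Equiv.Perm.mul_apply, ih, Nat.cast_succ, ← add_assoc]
      rfl
  simpa only [this] using ordBit_add_natCast j

/-- The effect of a word of adjacent swaps: the list `e` records which pair of labels is exchanged
at each step, and only the parity of the multiplicity of a pair in `e` matters. -/
lemma ordBit_prod {k : ℕ} (π : Equiv.Perm (ZMod (k + 1))) (l : List (Equiv.Perm (ZMod (k + 1))))
    (hl : ∀ t ∈ l, IsAdjacentSwap t) :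
    ∃ (e : List (Sym2 (ZMod (k + 1)))) (g : ZMod (k + 1) → ZMod 2), e.length = l.length ∧
      ∀ x y, x ≠ y → ordBit ((l.prod * π) x) ((l.prod * π) y) =
        ordBit (π x) (π y) + (e.count s(x, y) : ZMod 2) + g x + g y := by
  induction l with
  | nil => exact ⟨[], fun _ => 0, rfl, by simp⟩
  | cons t l ih =>
    obtain ⟨e, g, hlen, h⟩ := ih fun t ht => hl t (List.mem_cons_of_mem _ ht)
    obtain ⟨i, rfl⟩ := hl t List.mem_cons_self
    obtain ⟨g', hg'⟩ := ordBit_swap i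
    set σ := l.prod * π with hσ
    refine ⟨s(σ.symm i, σ.symm (i + 1)) :: e, fun x => g x + g' (σ x), by simp [hlen],
      fun x y hxy => ?_⟩
    have hpair : (s(i, i + 1) = s(σ x, σ y)) ↔ s(σ.symm i, σ.symm (i + 1)) = s(x, y) := by
      simp only [Sym2.eq_iff, Equiv.symm_apply_eq]
    rw [List.prod_cons, mul_assoc, ← hσ, Equiv.Perm.mul_apply _ σ x,
      Equiv.Perm.mul_apply _ σ y,
      hg' _ _ (σ.injective.ne hxy), h x y hxy, List.count_cons]
    simp only [hpair, beq_iff_eq]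
    push_cast
    ring

lemma arith_bound (a b m : ℕ) (h : a.choose 2 + b.choose 2 ≤ m) : (a + b - 1) ^ 2 / 4 ≤ m := by
  rcases Nat.eq_zero_or_pos (a + b) with h0 | h0
  · simp [h0]
  suffices (a + b - 1) ^ 2 ≤ 4 * m + 1 by omega
  have hq : ∀ c : ℕ, (2 * c.choose 2 : ℤ) = c * (c - 1) := by
    intro c
    have := Nat.choose_two_right c
    have h2 := Nat.two_mul_div_two_of_even (Nat.even_mul_pred_self c)
    rw [← this] at h2
    rcases c with _ | c
    · simp
    · simp only [Nat.add_sub_cancel] at h2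
      have h3 : (2 * ((c + 1).choose 2 : ℕ) : ℤ) = (c + 1) * c := by exact_mod_cast h2
      rw [h3]; push_cast; ring
  zify [show 1 ≤ a + b from h0] at h ⊢
  nlinarith [hq a, hq b, sq_nonneg ((a : ℤ) - b)]

/-- Pairs inside a level set of `g` must each be exchanged an odd number of times, hence occur in
`e`; counting them in the two level sets `S` and `T` bounds the length of the word. -/
lemma length_ge_of_reversal {k : ℕ} (l : List (Equiv.Perm (ZMod (k + 1))))
    (hl : ∀ t ∈ l, IsAdjacentSwap t)
    (hr : l.prod * Equiv.neg (ZMod (k + 1)) ∈ Subgroup.zpowers (trivCycle (k + 1))) :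
    k ^ 2 / 4 ≤ l.length := by
  classical
  obtain ⟨e, g₁, hlen, h₁⟩ := ordBit_prod _ l hl
  obtain ⟨g₂, h₂⟩ := ordBit_zpow hr
  obtain ⟨g₃, h₃⟩ := ordBit_neg (k := k)
  set g : ZMod (k + 1) → ZMod 2 := fun x => g₁ x + g₂ x + g₃ x with hg
  have two : (2 : ZMod 2) = 0 := by decide
  have hmem : ∀ x y, x ≠ y → g x = g y → s(x, y) ∈ e := by
    intro x y hxy hgxy
    by_contra hne
    have e1 := h₁ x y hxy
    rw [h₂ x y hxy, List.count_eq_zero.mpr hne, Equiv.neg_apply,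
      h₃ x y hxy] at e1
    have e2 : (1 : ZMod 2) + (g x + g y) = 0 := by
      simp only [hg]
      push_cast at e1
      linear_combination -e1 + (g₂ x + g₂ y) * two
    rw [hgxy] at e2
    have e3 : (1 : ZMod 2) = 0 := by linear_combination e2 - g y * two
    exact absurd e3 (by decide)
  let S : Finset (ZMod (k + 1)) := Finset.univ.filter fun x => g x = 0
  let T : Finset (ZMod (k + 1)) := Finset.univ.filter fun x => ¬ g x = 0
  have hcard : S.card + T.card = k + 1 := by
    rw [Finset.card_filter_add_card_filter_not, Finset.card_univ, ZMod.card]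
  have hT : ∀ x ∈ T, g x = 1 := by
    intro x hx
    have : g x ≠ 0 := (Finset.mem_filter.mp hx).2
    revert this
    generalize g x = c
    revert c
    decide
  have hS : ∀ x ∈ S, g x = 0 := fun x hx => (Finset.mem_filter.mp hx).2
  have hsub : S.offDiag.image Sym2.mk.uncurry ∪ T.offDiag.image Sym2.mk.uncurry ⊆ e.toFinset := by
    intro p hp
    rw [List.mem_toFinset]
    rcases Finset.mem_union.mp hp with hp | hp <;>
    · obtain ⟨⟨x, y⟩, hxy, rfl⟩ := Finset.mem_image.mp hp
      obtain ⟨hx, hy, hne⟩ := Finset.mem_offDiag.mp hxy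
      exact hmem x y hne (by simp_all)
  have hdisj : Disjoint (S.offDiag.image Sym2.mk.uncurry) (T.offDiag.image Sym2.mk.uncurry) := by
    rw [Finset.disjoint_left]
    intro p hp hq
    obtain ⟨⟨x, y⟩, hxy, rfl⟩ := Finset.mem_image.mp hp
    obtain ⟨⟨z, w⟩, hzw, hpq⟩ := Finset.mem_image.mp hq
    obtain ⟨hx, hy, -⟩ := Finset.mem_offDiag.mp hxy
    obtain ⟨hz, -, -⟩ := Finset.mem_offDiag.mp hzw
    have := hT z hz
    rcases Sym2.eq_iff.mp hpq with ⟨h, -⟩ | ⟨h, -⟩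
    · exact zero_ne_one ((hS x hx).symm.trans ((congrArg g h).symm.trans this))
    · exact zero_ne_one ((hS y hy).symm.trans ((congrArg g h).symm.trans this))
  have hle := (Finset.card_le_card hsub).trans (List.toFinset_card_le e)
  rw [Finset.card_union_of_disjoint hdisj, Sym2.card_image_offDiag, Sym2.card_image_offDiag,
    hlen] at hle
  have := arith_bound _ _ _ hle
  rwa [hcard, Nat.add_sub_cancel] at this

/-- Adjacent swaps generate the symmetric group, so `sortDist` is the infimum of a nonempty set. -/
lemma exists_sorting {k : ℕ} (π : Equiv.Perm (ZMod (k + 1))) :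
    ∃ l : List (Equiv.Perm (ZMod (k + 1))), (∀ t ∈ l, IsAdjacentSwap t) ∧ l.prod = π := by
  have h : π ∈ Submonoid.closure
      (Set.range fun i : Fin k => Equiv.swap i.castSucc i.succ) := by
    rw [Equiv.Perm.mclosure_swap_castSucc_succ]
    trivial
  obtain ⟨l, hl, hp⟩ := Submonoid.exists_list_of_mem_closure h
  refine ⟨l, fun t ht => ?_, hp⟩
  obtain ⟨i, rfl⟩ := hl t ht
  exact ⟨i.castSucc, congrArg (Equiv.swap _) (Fin.coeSucc_eq_succ (a := i)).symm⟩

theorem f_ge (n : ℕ) (hn : 1 ≤ n) : (n - 1) ^ 2 / 4 ≤ f n := by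
  obtain ⟨k, rfl⟩ : ∃ k, n = k + 1 := ⟨n - 1, by omega⟩
  have hbdd : BddAbove {m | ∃ π : Equiv.Perm (ZMod (k + 1)), m = sortDist π} := by
    have : {m | ∃ π : Equiv.Perm (ZMod (k + 1)), m = sortDist π} =
        Set.range (sortDist (n := k + 1)) := by
      ext m
      simp [eq_comm]
    rw [this]
    exact (Set.finite_range _).bddAbove
  refine le_trans ?_ (le_csSup hbdd ⟨Equiv.neg (ZMod (k + 1)), rfl⟩)
  refine le_csInf ?_ ?_
  · obtain ⟨l, hl, hp⟩ := exists_sorting (Equiv.neg (ZMod (k + 1)))⁻¹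
    exact ⟨_, l, rfl, hl, by rw [hp, inv_mul_cancel]; exact one_mem _⟩
  · rintro m ⟨l, rfl, hl, hr⟩
    exact length_ge_of_reversal l hl hr
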